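/- Let F : [B(H)^n]_{γ1} → [B(H)^n]_{γ2} be a free biholomorphic map with F(0)=0. Then there is an invertible bounded linear operator L on ℂ^n such that F(X_1,...,X_n) = [X_1,...,X_n]L for every (X_1,...,X_n) ∈ [B(H)^n]_{γ1}; i.e., F = Φ_L is linear. -/

import Mathlib

noncomputable section

open Filter

namespace NC

variable {H : Type*} [NormedAddCommGroup H] [InnerProductSpace ℂ H] [CompleteSpace H]

/-- The product `X_α = X_{i₁} ⋯ X_{i_k}` for a word `α = g_{i₁} ⋯ g_{i_k}`. -/
def wordProd {n : ℕ} (X : Fin n → H →L[ℂ] H) (w : List (Fin n)) : H →L[ℂ] H :=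
  (w.map X).prod

/-- The row norm `‖X₁X₁^* + ⋯ + XₙXₙ^*‖^{1/2}` of a tuple. -/
def rowNorm {n : ℕ} (X : Fin n → H →L[ℂ] H) : ℝ :=
  Real.sqrt ‖∑ i, X i * ContinuousLinearMap.adjoint (X i)‖

/-- The open operatorial ball `[B(H)ⁿ]_γ`. -/
def ball (n : ℕ) (H : Type*) [NormedAddCommGroup H] [InnerProductSpace ℂ H]
    [CompleteSpace H] (γ : ℝ) : Set (Fin n → H →L[ℂ] H) :=
  {X | rowNorm X < γ}

/-- The closed operatorial ball `[B(H)ⁿ]_γ⁻`. -/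
def cball (n : ℕ) (H : Type*) [NormedAddCommGroup H] [InnerProductSpace ℂ H]
    [CompleteSpace H] (γ : ℝ) : Set (Fin n → H →L[ℂ] H) :=
  {X | rowNorm X ≤ γ}

/-- The homogeneous part of degree `k` of the power series with coefficients `a`,
evaluated at `X`:  `∑_{|α|=k} a_α X_α`. -/
def homog {n : ℕ} (a : List (Fin n) → ℂ) (X : Fin n → H →L[ℂ] H) (k : ℕ) :
    H →L[ℂ] H :=
  ∑ w : Fin k → Fin n, a (List.ofFn w) • wordProd X (List.ofFn w)

/-- `RepOn γ a F` means that the free power series with coefficients `a` converges in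
operator norm to `F X` at every point `X` of the open ball `[B(H)ⁿ]_γ`; i.e. `F` is the
free holomorphic function with coefficients `a` on `[B(H)ⁿ]_γ`. -/
def RepOn {n : ℕ} (γ : ℝ) (a : List (Fin n) → ℂ)
    (F : (Fin n → H →L[ℂ] H) → H →L[ℂ] H) : Prop :=
  ∀ X ∈ ball n H γ,
    Tendsto (fun N => ∑ k ∈ Finset.range N, homog a X k) atTop (nhds (F X))

/-- `F` is a free holomorphic function (with scalar coefficients) on `[B(H)ⁿ]_γ`. -/
def IsFreeHolo {n : ℕ} (γ : ℝ) (F : (Fin n → H →L[ℂ] H) → H →L[ℂ] H) : Prop :=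
  ∃ a, RepOn γ a F

/-- `F` is a free holomorphic map `[B(H)ⁿ]_γ → B(H)^m`. -/
def IsFreeHoloMap {n m : ℕ} (γ : ℝ)
    (F : (Fin n → H →L[ℂ] H) → Fin m → H →L[ℂ] H) : Prop :=
  ∀ i, IsFreeHolo γ fun X => F X i

/-- `Ψ` is a free holomorphic automorphism of `[B(H)ⁿ]_γ`: a free holomorphic map of the
ball to itself admitting a free holomorphic inverse. -/
def IsFreeAut {n : ℕ} (γ : ℝ) (Ψ : (Fin n → H →L[ℂ] H) → Fin n → H →L[ℂ] H) : Prop :=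
  IsFreeHoloMap γ Ψ ∧ Set.MapsTo Ψ (ball n H γ) (ball n H γ) ∧
    ∃ Φ, IsFreeHoloMap γ Φ ∧ Set.MapsTo Φ (ball n H γ) (ball n H γ) ∧
      (∀ X ∈ ball n H γ, Φ (Ψ X) = X) ∧ ∀ X ∈ ball n H γ, Ψ (Φ X) = X

end NC

/-!
On row operators `[X₁, …, Xₙ] : H^(n) → H` the ball `[B(H)ⁿ]_γ` is the open `γ`-ball of a complex
Banach space. Cauchy estimates along the slices `c ↦ F(cX)` make the homogeneous expansion of a
bounded free holomorphic map converge uniformly on smaller balls, so such a map is Fréchet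
holomorphic, and its derivative at `0` is its part of degree one, `Φ_L` for a scalar matrix `L`.

Let `Φ_M` be the derivative at `0` of `G = F⁻¹`. By the chain rule `LM = 1`, and by the Schwarz
lemma `Φ_M` maps `[B(H)ⁿ]_{γ₂}` into `[B(H)ⁿ]_{γ₁}`, so `f = Φ_M ∘ F` is a self-map of a ball that
fixes `0` with derivative the identity. Cartan's uniqueness theorem gives `f = id`: near `0` the
`N`-th iterate of `f` moves `x` by at least `N ‖f x - x‖ / 2`, which stays bounded only if
`f x = x`. Hence `F` is the inverse `Φ_L` of `Φ_M`.
-/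

section CartanUniqueness

open Metric Set Topology

theorem mul_norm_sub_le_norm_iterate_sub {E : Type*} [NormedAddCommGroup E] [NormedSpace ℝ E]
    {f : E → E} {x : E} {N : ℕ} {ε : ℝ}
    (h : ∀ k < N, ‖(f^[k] (f x) - f x) - (f^[k] x - x)‖ ≤ ε * ‖f x - x‖) :
    N * ((1 - ε) * ‖f x - x‖) ≤ ‖f^[N] x - x‖ := by
  set S := ∑ k ∈ Finset.range N, ((f^[k] (f x) - f x) - (f^[k] x - x)) with hS
  have telescope : f^[N] x - x = N • (f x - x) + S := by
    rw [← Finset.card_range N, ← Finset.sum_const, hS, ← Finset.sum_add_distrib]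
    simpa [sub_sub_sub_comm _ (f x)] using (Finset.sum_range_sub (f^[·] x) N).symm
  have error : ‖S‖ ≤ N * (ε * ‖f x - x‖) :=
    (norm_sum_le_of_le _ fun k hk ↦ h k (Finset.mem_range.1 hk)).trans_eq (by simp)
  calc N * ((1 - ε) * ‖f x - x‖) ≤ ‖N • (f x - x)‖ - ‖S‖ := by
        rw [RCLike.norm_nsmul ℝ, nsmul_eq_mul]; linarith
    _ ≤ ‖f^[N] x - x‖ := telescope ▸ norm_sub_le_norm_add _ _

variable {E F : Type*} [NormedAddCommGroup E] [NormedSpace ℂ E]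
  [NormedAddCommGroup F] [NormedSpace ℂ F]

theorem norm_sub_le_of_fderiv_eq_zero {h : E → F} {c : E} {R C δ : ℝ}
    (hd : DifferentiableOn ℂ h (ball c R)) (hC : ∀ z ∈ ball c R, ‖h z‖ ≤ C)
    (hc : h c = 0) (hc' : fderiv ℂ h c = 0) (hδ : 0 < δ) (hδR : 2 * δ ≤ R)
    {x y : E} (hx : x ∈ ball c δ) (hy : y ∈ ball c δ) :
    ‖h y - h x‖ ≤ 8 * C * δ / R ^ 2 * ‖y - x‖ := by
  have hR : 0 < R := by linarith
  have hC₀ : 0 ≤ C := (norm_nonneg _).trans (hC c (mem_ball_self hR))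
  have quadratic : ∀ z ∈ ball c R, ‖h z‖ ≤ C * (dist z c / R) ^ 2 := fun z hz ↦ by
    have littleO : (h · - h c) =o[𝓝 c] fun w ↦ ‖w - c‖ ^ 1 := by
      simpa [hc'] using (hd.differentiableAt (ball_mem_nhds c hR)).hasFDerivAt.isLittleO.norm_right
    simpa [hc] using Complex.dist_le_mul_div_pow_of_mapsTo_ball_of_isLittleO hd
      (fun w hw ↦ by simpa [hc] using hC w hw) littleO hz
  have ball_sub : ∀ z ∈ ball c δ, ball z δ ⊆ ball c (2 * δ) := fun z hz ↦
    ball_subset_ball' (by linarith [mem_ball.1 hz])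
  have small : ∀ z ∈ ball c (2 * δ), ‖h z‖ ≤ 4 * C * δ ^ 2 / R ^ 2 := fun z hz ↦ calc
    ‖h z‖ ≤ C * (dist z c / R) ^ 2 := quadratic z (ball_subset_ball hδR hz)
    _ ≤ C * (2 * δ / R) ^ 2 := by gcongr; exact (mem_ball.1 hz).le
    _ = 4 * C * δ ^ 2 / R ^ 2 := by ring
  have deriv_small : ∀ z ∈ ball c δ, ‖fderiv ℂ h z‖ ≤ 8 * C * δ / R ^ 2 := fun z hz ↦ by
    have maps : MapsTo h (ball z δ) (closedBall (h z) (8 * C * δ ^ 2 / R ^ 2)) := fun w hw ↦ calc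
      dist (h w) (h z) ≤ ‖h w‖ + ‖h z‖ := dist_le_norm_add_norm _ _
      _ ≤ 4 * C * δ ^ 2 / R ^ 2 + 4 * C * δ ^ 2 / R ^ 2 :=
        add_le_add (small w (ball_sub z hz hw)) (small z (ball_sub z hz (mem_ball_self hδ)))
      _ = 8 * C * δ ^ 2 / R ^ 2 := by ring
    calc ‖fderiv ℂ h z‖ ≤ 8 * C * δ ^ 2 / R ^ 2 / δ :=
          Complex.norm_fderiv_le_div_of_mapsTo_ball
            (hd.mono ((ball_sub z hz).trans (ball_subset_ball hδR))) maps hδ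
      _ = 8 * C * δ / R ^ 2 := by field_simp
  have diffAt : ∀ z ∈ ball c δ, DifferentiableAt ℂ h z := fun z hz ↦
    hd.differentiableAt (isOpen_ball.mem_nhds (ball_subset_ball (by linarith) hz))
  exact (convex_ball c δ).norm_image_sub_le_of_norm_fderiv_le diffAt deriv_small hx hy

theorem exists_ball_norm_iterate_sub_sub_le {f : E → E} {U : Set E} {a : E}
    (hU : U ∈ 𝓝 a) (hbdd : Bornology.IsBounded U) (hd : DifferentiableOn ℂ f U)
    (hf : MapsTo f U U) (ha : f a = a) (h : HasFDerivAt f (.id ℂ E) a) :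
    ∃ δ > 0, ∀ k : ℕ, ∀ x ∈ ball a δ, ∀ y ∈ ball a δ,
      ‖(f^[k] y - y) - (f^[k] x - x)‖ ≤ 1 / 2 * ‖y - x‖ := by
  obtain ⟨R, hR, hRU⟩ := Metric.mem_nhds_iff.1 hU
  obtain ⟨C, hC⟩ := Metric.isBounded_iff.1 hbdd
  have hC₀ : 0 ≤ C := dist_nonneg.trans (hC (mem_of_mem_nhds hU) (mem_of_mem_nhds hU))
  -- All the maps `f^[k] - id` vanish to first order at `a` and have the same bound `C`,
  -- so one radius serves every `k`.
  set δ := R ^ 2 / (16 * C + 2 * R) with hδ_def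
  have hδ : 0 < δ := by positivity
  have hδR : 2 * δ ≤ R := by
    rw [hδ_def, ← mul_div_assoc, div_le_iff₀ (by positivity)]; nlinarith
  have hδC : 8 * C * δ / R ^ 2 ≤ 1 / 2 := by
    rw [hδ_def, div_le_iff₀ (by positivity), ← mul_div_assoc, div_le_iff₀ (by positivity)]
    nlinarith [pow_pos hR 3]
  refine ⟨δ, hδ, fun k x hx y hy ↦ ?_⟩
  have hd_k : DifferentiableOn ℂ (fun z ↦ f^[k] z - z) U :=
    (hd.iterate hf k).sub differentiableOn_id
  have h_k : HasFDerivAt (fun z ↦ f^[k] z - z) (0 : E →L[ℂ] E) a := by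
    have := (HasFDerivAt.iterate (f' := 1) h ha k).fun_sub (hasFDerivAt_id a)
    rwa [one_pow, ContinuousLinearMap.one_def, sub_self] at this
  have bound : ∀ z ∈ ball a R, ‖f^[k] z - z‖ ≤ C := fun z hz ↦ by
    simpa [dist_eq_norm] using hC (hf.iterate k (hRU hz)) (hRU hz)
  exact (norm_sub_le_of_fderiv_eq_zero (hd_k.mono hRU) bound
    (by simp [Function.iterate_fixed ha]) h_k.fderiv hδ hδR hx hy).trans (by gcongr)

theorem eventuallyEq_id_of_mapsTo_of_hasFDerivAt_id {f : E → E} {U : Set E} {a : E}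
    (hU : U ∈ 𝓝 a) (hbdd : Bornology.IsBounded U) (hd : DifferentiableOn ℂ f U)
    (hf : MapsTo f U U) (ha : f a = a) (h : HasFDerivAt f (.id ℂ E) a) :
    f =ᶠ[𝓝 a] id := by
  obtain ⟨C, hC⟩ := Metric.isBounded_iff.1 hbdd
  obtain ⟨δ, hδ, contraction⟩ := exists_ball_norm_iterate_sub_sub_le hU hbdd hd hf ha h
  have preimage : ∀ᶠ x in 𝓝 a, f x ∈ ball a δ :=
    h.continuousAt.eventually_mem (ha.symm ▸ ball_mem_nhds a hδ)
  filter_upwards [ball_mem_nhds a hδ, preimage, hU] with x hx hfx hxU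
  have linear_growth (N : ℕ) : N • (1 / 2 * ‖f x - x‖) ≤ C := by
    have lower := mul_norm_sub_le_norm_iterate_sub (N := N) fun k _ ↦ contraction k x hx _ hfx
    have upper : ‖f^[N] x - x‖ ≤ C := by
      simpa [dist_eq_norm] using hC (hf.iterate N hxU) hxU
    rw [nsmul_eq_mul]
    linarith
  by_contra hne
  have pos : 0 < 1 / 2 * ‖f x - x‖ := by
    have := norm_pos_iff.2 (sub_ne_zero.2 hne); positivity
  obtain ⟨N, hN⟩ := exists_lt_nsmul pos C
  exact (linear_growth N).not_gt hN

theorem eqOn_zero_ball_of_eventuallyEq_zero {h : E → F} {c : E} {R C : ℝ}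
    (hd : DifferentiableOn ℂ h (ball c R)) (hC : ∀ z ∈ ball c R, ‖h z‖ ≤ C)
    (h₀ : h =ᶠ[𝓝 c] 0) : EqOn h 0 (ball c R) := by
  intro z hz
  have hR : 0 < R := nonempty_ball.1 ⟨z, hz⟩
  have hc : h c = 0 := h₀.eq_of_nhds
  have decay (n : ℕ) : ‖h z‖ ≤ C * (dist z c / R) ^ (n + 1) := by
    have littleO : (h · - h c) =o[𝓝 c] fun w ↦ ‖w - c‖ ^ n := by
      refine (Asymptotics.isLittleO_zero _ _).congr' ?_ .rfl
      filter_upwards [h₀] with w hw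
      simp [hw, hc]
    simpa [hc] using Complex.dist_le_mul_div_pow_of_mapsTo_ball_of_isLittleO hd
      (fun w hw ↦ by simpa [hc] using hC w hw) littleO hz
  have lim : Tendsto (fun n : ℕ ↦ C * (dist z c / R) ^ (n + 1)) atTop (𝓝 (C * 0)) :=
    ((tendsto_pow_atTop_nhds_zero_of_lt_one (by positivity)
      ((div_lt_one hR).2 (mem_ball.1 hz))).comp (tendsto_add_atTop_nat 1)).const_mul C
  exact norm_le_zero_iff.1 (mul_zero C ▸ ge_of_tendsto' lim decay)

theorem eqOn_id_of_mapsTo_ball_of_hasFDerivAt_id {f : E → E} {c : E} {R : ℝ}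
    (hd : DifferentiableOn ℂ f (ball c R)) (hf : MapsTo f (ball c R) (ball c R))
    (hc : f c = c) (h : HasFDerivAt f (.id ℂ E) c) : EqOn f id (ball c R) := by
  intro z hz
  have near := eventuallyEq_id_of_mapsTo_of_hasFDerivAt_id
    (ball_mem_nhds c (nonempty_ball.1 ⟨z, hz⟩)) isBounded_ball hd hf hc h
  have bound : ∀ w ∈ ball c R, ‖f w - w‖ ≤ R + R := fun w hw ↦ by
    rw [← dist_eq_norm]
    exact (dist_triangle_right _ _ c).trans (add_le_add (hf hw).le hw.le)
  exact sub_eq_zero.1 (eqOn_zero_ball_of_eventuallyEq_zero (hd.sub differentiableOn_id) bound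
    (near.mono fun w hw ↦ sub_eq_zero.2 hw) hz)

theorem fderiv_fderiv_of_leftInverse {f : E → F} {g : F → E} {a : E}
    (hg : DifferentiableAt ℂ g (f a)) (hf : DifferentiableAt ℂ f a)
    (hgf : ∀ᶠ x in 𝓝 a, g (f x) = x) (x : E) :
    fderiv ℂ g (f a) (fderiv ℂ f a x) = x := by
  have comp : HasFDerivAt (g ∘ f) (.id ℂ E) a := (hasFDerivAt_id a).congr_of_eventuallyEq hgf
  exact DFunLike.congr_fun ((hg.hasFDerivAt.comp a hf.hasFDerivAt).unique comp) x

theorem eqOn_fderiv_of_leftInvOn_ball {f : E → F} {g : F → E} {r₁ r₂ : ℝ}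
    (hf : DifferentiableOn ℂ f (ball 0 r₁)) (hf_maps : MapsTo f (ball 0 r₁) (ball 0 r₂))
    (hg : DifferentiableOn ℂ g (ball 0 r₂)) (hg_maps : MapsTo g (ball 0 r₂) (ball 0 r₁))
    (hgf : LeftInvOn g f (ball 0 r₁)) (hf₀ : f 0 = 0)
    (hinj : Function.Injective (fderiv ℂ g 0)) :
    EqOn f (fderiv ℂ f 0) (ball 0 r₁) := by
  intro x hx
  have hr₁ : 0 < r₁ := nonempty_ball.1 ⟨x, hx⟩
  have hr₂ : 0 < r₂ := nonempty_ball.1 ⟨_, hf_maps hx⟩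
  have h₀₁ : ball (0 : E) r₁ ∈ 𝓝 0 := ball_mem_nhds 0 hr₁
  have h₀₂ : ball (0 : F) r₂ ∈ 𝓝 (f 0) := by
    rw [hf₀]; exact ball_mem_nhds 0 hr₂
  have hg₀ : g 0 = 0 := by simpa [hf₀] using hgf (mem_ball_self hr₁)
  set A := fderiv ℂ f 0
  set B := fderiv ℂ g 0
  have hBA (y : E) : B (A y) = y := by
    simpa only [hf₀] using fderiv_fderiv_of_leftInverse (hg.differentiableAt h₀₂)
      (hf.differentiableAt h₀₁) (eventually_of_mem h₀₁ hgf) y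
  have hB_norm : ‖B‖ ≤ r₁ / r₂ := Complex.norm_fderiv_le_div_of_mapsTo_ball hg
    (hg₀.symm ▸ hg_maps.mono_right ball_subset_closedBall) hr₂
  have hB_maps : MapsTo B (ball 0 r₂) (ball 0 r₁) := fun y hy ↦ by
    rw [mem_ball_zero_iff] at hy ⊢
    calc ‖B y‖ ≤ r₁ / r₂ * ‖y‖ := B.le_of_opNorm_le hB_norm y
      _ < r₁ / r₂ * r₂ := by gcongr
      _ = r₁ := div_mul_cancel₀ _ hr₂.ne'
  have hBf : HasFDerivAt (B ∘ f) (.id ℂ E) 0 := by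
    have := B.hasFDerivAt.comp (0 : E) (hf.differentiableAt h₀₁).hasFDerivAt
    rwa [show B.comp A = .id ℂ E from ContinuousLinearMap.ext hBA] at this
  have cartan := eqOn_id_of_mapsTo_ball_of_hasFDerivAt_id
    (B.differentiable.comp_differentiableOn hf) (hB_maps.comp hf_maps) (by simp [hf₀]) hBf
  exact hinj ((cartan hx).trans (hBA x).symm)

end CartanUniqueness

section HomogeneousExpansions

open Metric Set Topology
open scoped NNReal ENNReal

variable {E F : Type*} [NormedAddCommGroup E] [NormedAddCommGroup F]

theorem tendsto_zero_of_tendsto_sum_range {a : ℕ → F} {l : F}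
    (h : Tendsto (fun N ↦ ∑ k ∈ Finset.range N, a k) atTop (𝓝 l)) : Tendsto a atTop (𝓝 0) := by
  simpa [Finset.sum_range_succ] using ((tendsto_add_atTop_iff_nat 1).2 h).sub h

variable [NormedSpace ℂ E] [NormedSpace ℂ F] [CompleteSpace F]

theorem hasFPowerSeriesOnBall_of_tendsto_sum_range {f : ℂ → F} {a : ℕ → F} {R : ℝ≥0} (hR : 0 < R)
    (h : ∀ z ∈ ball (0 : ℂ) R,
      Tendsto (fun N ↦ ∑ k ∈ Finset.range N, z ^ k • a k) atTop (𝓝 (f z))) :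
    HasFPowerSeriesOnBall f (fun k ↦ .mkPiRing ℂ (Fin k) (a k)) 0 R := by
  set p : FormalMultilinearSeries ℂ ℂ F := fun k ↦ .mkPiRing ℂ (Fin k) (a k) with hp
  have hp_apply (k : ℕ) (z : ℂ) : (p k fun _ ↦ z) = z ^ k • a k := by simp [hp]
  have radius : (R : ℝ≥0∞) ≤ p.radius := by
    refine ENNReal.le_of_forall_nnreal_lt fun ρ hρ ↦ p.le_radius_of_tendsto (l := 0) ?_
    have hρR : ((ρ : ℝ) : ℂ) ∈ ball (0 : ℂ) R := by simpa using ENNReal.coe_lt_coe.1 hρ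
    simpa [hp, norm_smul, mul_comm] using (tendsto_zero_of_tendsto_sum_range (h _ hρR)).norm
  refine ⟨radius, by simpa using hR, fun {z} hz ↦ ?_⟩
  have hzR : z ∈ ball (0 : ℂ) R := by simpa using hz
  have summable := p.summable (eball_subset_eball radius hz)
  rw [zero_add, summable.hasSum_iff_tendsto_nat]
  simpa only [hp_apply] using h z hzR

theorem norm_le_div_pow_of_hasFPowerSeriesOnBall {f : ℂ → F}
    {p : FormalMultilinearSeries ℂ ℂ F} {c : ℂ} {R : ℝ≥0∞} {ρ : ℝ≥0} {C : ℝ}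
    (h : HasFPowerSeriesOnBall f p c R) (hρ : 0 < ρ) (hρR : ρ < R)
    (hC : ∀ z ∈ sphere c ρ, ‖f z‖ ≤ C) (k : ℕ) : ‖p k‖ ≤ C / ρ ^ k := by
  have subset : closedBall c ρ ⊆ eball c R := fun z hz ↦ by
    rw [← closedEBall_coe] at hz
    exact hz.trans_lt hρR
  have cauchy := Complex.norm_iteratedDeriv_le_of_forall_mem_sphere_norm_le k
    (NNReal.coe_pos.2 hρ) (h.differentiableOn.diffContOnCl_ball subset) hC
  rw [iteratedDeriv_eq_iteratedFDeriv, ← h.factorial_smul, RCLike.norm_nsmul ℂ, nsmul_eq_mul,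
    mul_div_assoc] at cauchy
  exact p.norm_apply_eq_norm_coef.trans_le (le_of_mul_le_mul_left cauchy (by positivity))

/-- `f` is the sum on the ball of radius `r` about the origin of a series `∑ P k` whose `k`-th term
is holomorphic and homogeneous of degree `k`. As in the definition of a free holomorphic function,
only the convergence of the partial sums at each point is required. -/
structure HasHomogeneousExpansionOnBall (f : E → F) (P : ℕ → E → F) (r : ℝ) : Prop where
  differentiable (k : ℕ) : Differentiable ℂ (P k)
  map_smul (k : ℕ) (c : ℂ) (x : E) : P k (c • x) = c ^ k • P k x
  tendsto_sum {x : E} (hx : x ∈ ball 0 r) :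
    Tendsto (fun N ↦ ∑ k ∈ Finset.range N, P k x) atTop (𝓝 (f x))

namespace HasHomogeneousExpansionOnBall

variable {f : E → F} {P : ℕ → E → F} {r C : ℝ}

theorem hasFPowerSeriesOnBall_smul (h : HasHomogeneousExpansionOnBall f P r) {x : E} {R : ℝ≥0}
    (hR : 0 < R) (hx : MapsTo (fun c : ℂ ↦ c • x) (ball 0 R) (ball 0 r)) :
    HasFPowerSeriesOnBall (fun c : ℂ ↦ f (c • x)) (fun k ↦ .mkPiRing ℂ (Fin k) (P k x)) 0 R :=
  hasFPowerSeriesOnBall_of_tendsto_sum_range hR fun c hc ↦ by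
    simpa only [h.map_smul] using h.tendsto_sum (hx hc)

theorem norm_le (h : HasHomogeneousExpansionOnBall f P r) (hC : ∀ x ∈ ball 0 r, ‖f x‖ ≤ C)
    {x : E} (hx : x ∈ ball 0 r) (k : ℕ) : ‖P k x‖ ≤ C := by
  obtain ⟨R, hR, hRx⟩ : ∃ R : ℝ, 1 < R ∧ R * ‖x‖ < r := by
    have hxr : ‖x‖ < r := mem_ball_zero_iff.1 hx
    have hr : 0 < r := (norm_nonneg x).trans_lt hxr
    refine ⟨2 * r / (‖x‖ + r), ?_, ?_⟩
    · rw [one_lt_div (by positivity)]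
      linarith
    · rw [div_mul_eq_mul_div, div_lt_iff₀ (by positivity)]
      nlinarith
  lift R to ℝ≥0 using zero_le_one.trans hR.le
  rw [← NNReal.coe_one, NNReal.coe_lt_coe] at hR
  have maps : MapsTo (fun c : ℂ ↦ c • x) (closedBall 0 R) (ball 0 r) := fun c hc ↦ by
    rw [mem_ball_zero_iff, norm_smul]
    exact (mul_le_mul_of_nonneg_right (mem_closedBall_zero_iff.1 hc) (norm_nonneg x)).trans_lt hRx
  have slice := h.hasFPowerSeriesOnBall_smul (zero_lt_one.trans hR)
    (maps.mono_left ball_subset_closedBall)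
  simpa using norm_le_div_pow_of_hasFPowerSeriesOnBall slice one_pos (ENNReal.coe_lt_coe.2 hR)
    (fun c hc ↦ hC _ (maps (closedBall_subset_closedBall hR.le (sphere_subset_closedBall hc)))) k

theorem norm_le_mul_pow (h : HasHomogeneousExpansionOnBall f P r) (hr : 0 < r)
    (hC : ∀ x ∈ ball 0 r, ‖f x‖ ≤ C) {s : ℝ} {x : E} (hx : x ∈ ball 0 s) (k : ℕ) :
    ‖P k x‖ ≤ C * (s / r) ^ k := by
  have hs : 0 < s := nonempty_ball.1 ⟨x, hx⟩
  have scaled : ((r / s : ℝ) : ℂ) • x ∈ ball 0 r := by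
    rw [mem_ball_zero_iff, norm_smul, Complex.norm_of_nonneg (by positivity), div_mul_eq_mul_div,
      div_lt_iff₀ hs]
    gcongr
    exact mem_ball_zero_iff.1 hx
  have := h.norm_le hC scaled k
  rwa [h.map_smul, norm_smul, norm_pow, Complex.norm_of_nonneg (by positivity),
    ← le_div_iff₀' (by positivity), div_eq_mul_inv, ← inv_pow, inv_div] at this

theorem norm_fderiv_le_mul_pow (h : HasHomogeneousExpansionOnBall f P r) (hr : 0 < r)
    (hC : ∀ x ∈ ball 0 r, ‖f x‖ ≤ C) {s t : ℝ} (hst : s < t) {x : E} (hx : x ∈ ball 0 s) (k : ℕ) :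
    ‖fderiv ℂ (P k) x‖ ≤ 2 * C / (t - s) * (t / r) ^ k := by
  have subset : ball x (t - s) ⊆ ball 0 t := ball_subset_ball' (by linarith [mem_ball.1 hx])
  have maps : MapsTo (P k) (ball x (t - s)) (closedBall (P k x) (2 * C * (t / r) ^ k)) :=
    fun y hy ↦ calc
      dist (P k y) (P k x) ≤ ‖P k y‖ + ‖P k x‖ := dist_le_norm_add_norm _ _
      _ ≤ C * (t / r) ^ k + C * (t / r) ^ k :=
        add_le_add (h.norm_le_mul_pow hr hC (subset hy) k)
          (h.norm_le_mul_pow hr hC (subset (mem_ball_self (sub_pos.2 hst))) k)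
      _ = 2 * C * (t / r) ^ k := by ring
  exact (Complex.norm_fderiv_le_div_of_mapsTo_ball (h.differentiable k).differentiableOn maps
    (sub_pos.2 hst)).trans_eq (by ring)

theorem differentiableOn (h : HasHomogeneousExpansionOnBall f P r)
    (hC : ∀ x ∈ ball 0 r, ‖f x‖ ≤ C) : DifferentiableOn ℂ f (ball 0 r) := by
  intro x hx
  have hr : 0 < r := nonempty_ball.1 ⟨x, hx⟩
  obtain ⟨s, hxs, hsr⟩ := exists_between (mem_ball_zero_iff.1 hx)
  obtain ⟨t, hst, htr⟩ := exists_between hsr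
  have hs : 0 < s := (norm_nonneg x).trans_lt hxs
  have ratio : Summable fun k : ℕ ↦ (t / r) ^ k :=
    summable_geometric_of_lt_one (by have := hs.trans hst; positivity) ((div_lt_one hr).2 htr)
  have summable {y : E} (hy : y ∈ ball 0 s) : Summable fun k ↦ P k y :=
    .of_norm_bounded (ratio.mul_left C) fun k ↦
      h.norm_le_mul_pow hr hC (ball_subset_ball hst.le hy) k
  have tsum_eq : EqOn (fun y ↦ ∑' k, P k y) f (ball 0 s) := fun y hy ↦
    tendsto_nhds_unique (summable hy).hasSum.tendsto_sum_nat
      (h.tendsto_sum (ball_subset_ball hsr.le hy))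
  have hxs' : x ∈ ball 0 s := mem_ball_zero_iff.2 hxs
  have deriv := hasFDerivAt_tsum_of_isPreconnected (ratio.mul_left _) isOpen_ball
    (convex_ball (0 : E) s).isPreconnected (fun k y _ ↦ (h.differentiable k y).hasFDerivAt)
    (fun k y hy ↦ h.norm_fderiv_le_mul_pow hr hC hst hy k) hxs' (summable hxs') hxs'
  have near := tsum_eq.eventuallyEq_of_mem (isOpen_ball.mem_nhds hxs')
  exact (deriv.congr_of_eventuallyEq near.symm).differentiableAt.differentiableWithinAt

theorem fderiv_zero_apply (h : HasHomogeneousExpansionOnBall f P r) (hr : 0 < r)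
    (hf : DifferentiableAt ℂ f 0) (x : E) : fderiv ℂ f 0 x = P 1 x := by
  have line : HasDerivAt (fun c : ℂ ↦ c • x) x 0 := by
    simpa using (hasDerivAt_id (0 : ℂ)).smul_const x
  obtain ⟨R, hR, hRx⟩ := Metric.mem_nhds_iff.1 <|
    line.continuousAt.preimage_mem_nhds (by simpa using ball_mem_nhds (0 : E) hr)
  lift R to ℝ≥0 using hR.le
  have slice := h.hasFPowerSeriesOnBall_smul (by exact_mod_cast hR) hRx
  have chain : HasDerivAt (fun c : ℂ ↦ f (c • x)) (fderiv ℂ f 0 x) 0 :=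
    HasFDerivAt.comp_hasDerivAt (0 : ℂ) (by simpa using hf.hasFDerivAt) line
  simpa using chain.unique slice.hasFPowerSeriesAt.hasDerivAt

end HasHomogeneousExpansionOnBall

end HomogeneousExpansions

namespace NC

variable {n m p : ℕ}

section RowOperator

variable {H : Type*} [NormedAddCommGroup H] [NormedSpace ℂ H]

/-- The normed space of operators `H^(n) → H`, with `H^(n)` the Hilbert direct sum. -/
def RowOperator (n : ℕ) (H : Type*) [NormedAddCommGroup H] [NormedSpace ℂ H] : Type _ :=
  PiLp 2 (fun _ : Fin n ↦ H) →L[ℂ] H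

instance : NormedAddCommGroup (RowOperator n H) :=
  inferInstanceAs (NormedAddCommGroup (PiLp 2 (fun _ : Fin n ↦ H) →L[ℂ] H))

instance : NormedSpace ℂ (RowOperator n H) :=
  inferInstanceAs (NormedSpace ℂ (PiLp 2 (fun _ : Fin n ↦ H) →L[ℂ] H))

instance [CompleteSpace H] : CompleteSpace (RowOperator n H) :=
  inferInstanceAs (CompleteSpace (PiLp 2 (fun _ : Fin n ↦ H) →L[ℂ] H))

/-- The row operator `[X₁, …, Xₙ] : H^(n) → H`, as an identification of tuples with operators. -/
def row : (Fin n → H →L[ℂ] H) ≃L[ℂ] RowOperator n H :=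
  show (Fin n → H →L[ℂ] H) ≃L[ℂ] (PiLp 2 (fun _ : Fin n ↦ H) →L[ℂ] H) from
  { toFun X := ∑ i, X i ∘L PiLp.proj 2 (fun _ ↦ H) i
    invFun T i := T ∘L ((PiLp.continuousLinearEquiv 2 ℂ fun _ : Fin n ↦ H).symm :
      (Fin n → H) →L[ℂ] _) ∘L .single ℂ (fun _ ↦ H) i
    map_add' X Y := by simp [Finset.sum_add_distrib]
    map_smul' c X := by simp [Finset.smul_sum]
    left_inv X := by
      ext i x
      simp [apply_ite]
    right_inv T := by
      ext x
      simp [← map_sum, ← WithLp.toLp_sum, Finset.univ_sum_single]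
    continuous_toFun := by fun_prop
    continuous_invFun := by fun_prop }

end RowOperator

variable {H : Type*} [NormedAddCommGroup H] [InnerProductSpace ℂ H]

/-- The map of row operators induced by a map of tuples. The sup norm that tuples carry as functions
on `Fin n` is only equivalent to `rowNorm`; on row operators `rowNorm` is the operator norm, so
`[B(H)ⁿ]_γ` becomes a ball of a complex Banach space. -/
def onRows (F : (Fin n → H →L[ℂ] H) → Fin m → H →L[ℂ] H) :
    RowOperator n H → RowOperator m H :=
  row ∘ F ∘ row.symm

theorem onRows_row (F : (Fin n → H →L[ℂ] H) → Fin m → H →L[ℂ] H) (X : Fin n → H →L[ℂ] H) :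
    onRows F (row X) = row (F X) := by
  simp [onRows]

theorem onRows_zero {F : (Fin n → H →L[ℂ] H) → Fin m → H →L[ℂ] H} (h : F 0 = 0) :
    onRows F 0 = 0 := by
  simp [onRows, h]

theorem differentiable_wordProd (w : List (Fin n)) :
    Differentiable ℂ fun X : Fin n → H →L[ℂ] H ↦ wordProd X w := by
  induction w with
  | nil => simp [wordProd]
  | cons i w ih =>
    simp only [wordProd, List.map_cons, List.prod_cons]
    exact (differentiable_apply i).mul ih

theorem wordProd_smul (c : ℂ) (X : Fin n → H →L[ℂ] H) (w : List (Fin n)) :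
    wordProd (c • X) w = c ^ w.length • wordProd X w := by
  induction w with
  | nil => simp [wordProd]
  | cons i w ih =>
    simp only [wordProd, List.map_cons, List.prod_cons, List.length_cons] at ih ⊢
    rw [ih, Pi.smul_apply, smul_mul_smul_comm, pow_succ']

theorem differentiable_homog (a : List (Fin n) → ℂ) (k : ℕ) :
    Differentiable ℂ fun X : Fin n → H →L[ℂ] H ↦ homog a X k :=
  .fun_sum fun w _ ↦ (differentiable_wordProd (List.ofFn w)).const_smul (a (List.ofFn w))

theorem homog_smul (a : List (Fin n) → ℂ) (c : ℂ) (X : Fin n → H →L[ℂ] H) (k : ℕ) :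
    homog a (c • X) k = c ^ k • homog a X k := by
  simp only [homog, Finset.smul_sum, wordProd_smul, List.length_ofFn, smul_comm (c ^ k)]

theorem homog_one (a : List (Fin n) → ℂ) (X : Fin n → H →L[ℂ] H) :
    homog a X 1 = ∑ i, a [i] • X i := by
  rw [homog, ← (Equiv.funUnique (Fin 1) (Fin n)).symm.sum_comp]
  simp [wordProd]

/-- The linear map `Φ_L(X) = [X₁, …, Xₙ] L` of tuples. -/
def linearSubst (L : Matrix (Fin n) (Fin m) ℂ) (X : Fin n → H →L[ℂ] H) : Fin m → H →L[ℂ] H :=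
  fun j ↦ ∑ i, L i j • X i

theorem linearSubst_one (X : Fin n → H →L[ℂ] H) :
    linearSubst (1 : Matrix (Fin n) (Fin n) ℂ) X = X := by
  ext1 j
  simp [linearSubst, Matrix.one_apply]

theorem linearSubst_linearSubst (L : Matrix (Fin n) (Fin m) ℂ) (M : Matrix (Fin m) (Fin p) ℂ)
    (X : Fin n → H →L[ℂ] H) : linearSubst M (linearSubst L X) = linearSubst (L * M) X := by
  ext1 j
  simp only [linearSubst, Matrix.mul_apply, Finset.smul_sum, Finset.sum_smul, smul_smul, mul_comm]
  exact Finset.sum_comm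

theorem linearSubst_injective {L : Matrix (Fin n) (Fin m) ℂ} {M : Matrix (Fin m) (Fin n) ℂ}
    (h : L * M = 1) : Function.Injective (linearSubst (H := H) L) :=
  Function.LeftInverse.injective (g := linearSubst M) fun X ↦ by
    rw [linearSubst_linearSubst, h, linearSubst_one]

theorem eq_one_of_linearSubst_eq_id [Nontrivial H] {L : Matrix (Fin n) (Fin n) ℂ}
    (h : ∀ X : Fin n → H →L[ℂ] H, linearSubst L X = X) : L = 1 := by
  ext i j
  have := congrFun (h (Pi.single i 1)) j
  rcases eq_or_ne i j with rfl | hij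
  · simpa [linearSubst, Pi.single_apply, ← Algebra.algebraMap_eq_smul_one, ite_eq_iff] using this
  · simpa [linearSubst, Pi.single_apply, hij, hij.symm] using this

variable [CompleteSpace H] {γ γ' : ℝ}

open ContinuousLinearMap (adjoint)

theorem adjoint_proj_apply {ι : Type*} [Fintype ι] [DecidableEq ι] {E : ι → Type*}
    [∀ i, NormedAddCommGroup (E i)] [∀ i, InnerProductSpace ℂ (E i)] [∀ i, CompleteSpace (E i)]
    (i : ι) (y : E i) : adjoint (PiLp.proj (𝕜 := ℂ) 2 E i) y = PiLp.single 2 i y :=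
  ext_inner_right ℂ fun z ↦ by
    rw [ContinuousLinearMap.adjoint_inner_left, PiLp.inner_apply,
      Finset.sum_eq_single i (fun j _ hj ↦ by simp [hj]) (by simp)]
    simp

theorem norm_row (X : Fin n → H →L[ℂ] H) : ‖row X‖ = rowNorm X := by
  set T : PiLp 2 (fun _ : Fin n ↦ H) →L[ℂ] H := ∑ i, X i ∘L PiLp.proj 2 (fun _ ↦ H) i with hT
  have mul_adjoint : T ∘L adjoint T = ∑ i, X i * adjoint (X i) := by
    ext y
    simp [hT, adjoint_proj_apply, apply_ite]
  have c_star : ‖∑ i, X i * adjoint (X i)‖ = ‖T‖ * ‖T‖ := by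
    simpa [mul_adjoint] using (adjoint T).norm_adjoint_comp_self
  rw [rowNorm, c_star, Real.sqrt_mul_self (norm_nonneg T)]
  rfl

theorem row_mem_ball_zero_iff {X : Fin n → H →L[ℂ] H} :
    row X ∈ Metric.ball (0 : RowOperator n H) γ ↔ X ∈ ball n H γ := by
  rw [mem_ball_zero_iff, norm_row, ball, Set.mem_ofPred_eq]

theorem row_symm_mem_ball_iff {T : RowOperator n H} :
    row.symm T ∈ ball n H γ ↔ T ∈ Metric.ball (0 : RowOperator n H) γ := by
  rw [← row_mem_ball_zero_iff, row.apply_symm_apply]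

theorem mapsTo_onRows {F : (Fin n → H →L[ℂ] H) → Fin m → H →L[ℂ] H}
    (h : Set.MapsTo F (ball n H γ) (ball m H γ')) :
    Set.MapsTo (onRows F) (Metric.ball (0 : RowOperator n H) γ)
      (Metric.ball (0 : RowOperator m H) γ') := fun _ hT ↦
  row_mem_ball_zero_iff.2 (h (row_symm_mem_ball_iff.2 hT))

theorem leftInvOn_onRows {F : (Fin n → H →L[ℂ] H) → Fin m → H →L[ℂ] H}
    {G : (Fin m → H →L[ℂ] H) → Fin n → H →L[ℂ] H} (h : Set.LeftInvOn G F (ball n H γ)) :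
    Set.LeftInvOn (onRows G) (onRows F) (Metric.ball (0 : RowOperator n H) γ) := fun T hT ↦ by
  have := h (row_symm_mem_ball_iff.2 hT)
  simp [onRows, this]

theorem hasHomogeneousExpansionOnBall_onRows {F : (Fin n → H →L[ℂ] H) → Fin m → H →L[ℂ] H}
    {a : Fin m → List (Fin n) → ℂ} (h : ∀ j, RepOn γ (a j) fun X ↦ F X j) :
    HasHomogeneousExpansionOnBall (onRows F) (fun k ↦ onRows fun X j ↦ homog (a j) X k) γ where
  differentiable k := by
    have := differentiable_pi.2 fun j ↦ differentiable_homog (H := H) (a j) k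
    exact row.differentiable.comp (this.comp row.symm.differentiable)
  map_smul k c T := by
    have homog_tuple : (fun j ↦ homog (a j) (row.symm (c • T)) k) =
        c ^ k • fun j ↦ homog (a j) (row.symm T) k :=
      funext fun j ↦ by rw [map_smul, homog_smul, Pi.smul_apply]
    exact (congrArg row homog_tuple).trans (map_smul row _ _)
  tendsto_sum {T} hT := by
    have coordinates := tendsto_pi_nhds.2 fun j ↦ h j _ (row_symm_mem_ball_iff.2 hT)
    refine ((row.continuous.tendsto _).comp coordinates).congr fun N ↦ ?_
    simp only [onRows, Function.comp_apply]
    rw [← map_sum]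
    exact congrArg row (funext fun j ↦ by rw [Finset.sum_apply])

theorem IsFreeHoloMap.differentiableOn_onRows {F : (Fin n → H →L[ℂ] H) → Fin m → H →L[ℂ] H}
    (hF : IsFreeHoloMap γ F) (hF_maps : Set.MapsTo F (ball n H γ) (ball m H γ')) :
    DifferentiableOn ℂ (onRows F) (Metric.ball (0 : RowOperator n H) γ) := by
  choose a ha using hF
  exact (hasHomogeneousExpansionOnBall_onRows ha).differentiableOn fun T hT ↦
    (mem_ball_zero_iff.1 (mapsTo_onRows hF_maps hT)).le

theorem IsFreeHoloMap.exists_fderiv_onRows {F : (Fin n → H →L[ℂ] H) → Fin m → H →L[ℂ] H}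
    (hF : IsFreeHoloMap γ F) (hγ : 0 < γ) (hd : DifferentiableAt ℂ (onRows F) 0) :
    ∃ L : Matrix (Fin n) (Fin m) ℂ, ⇑(fderiv ℂ (onRows F) 0) = onRows (linearSubst L) := by
  choose a ha using hF
  refine ⟨fun i j ↦ a j [i], funext fun T ↦ ?_⟩
  rw [(hasHomogeneousExpansionOnBall_onRows ha).fderiv_zero_apply hγ hd]
  simp only [homog_one]
  rfl

end NC

open NC in
theorem free_biholomorphic_fixing_origin_is_linear_general
    {H : Type*} [NormedAddCommGroup H] [InnerProductSpace ℂ H] [CompleteSpace H]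
    {n : ℕ} {γ₁ γ₂ : ℝ} (hγ₁ : 0 < γ₁)
    {F G : (Fin n → H →L[ℂ] H) → Fin n → H →L[ℂ] H}
    (hF : IsFreeHoloMap γ₁ F) (hFmaps : Set.MapsTo F (ball n H γ₁) (ball n H γ₂))
    (hG : IsFreeHoloMap γ₂ G) (hGmaps : Set.MapsTo G (ball n H γ₂) (ball n H γ₁))
    (hGF : ∀ X ∈ ball n H γ₁, G (F X) = X) (hF0 : F 0 = 0) :
    ∃ L : Matrix (Fin n) (Fin n) ℂ, IsUnit L ∧ Set.EqOn F (linearSubst L) (ball n H γ₁) := by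
  cases subsingleton_or_nontrivial H
  · exact ⟨1, isUnit_one, fun X _ ↦ Subsingleton.elim _ _⟩
  have hf_maps := mapsTo_onRows hFmaps
  have hγ₂ : 0 < γ₂ := Metric.nonempty_ball.1 ⟨_, hf_maps (Metric.mem_ball_self hγ₁)⟩
  have hf := hF.differentiableOn_onRows hFmaps
  have hg := hG.differentiableOn_onRows hGmaps
  have hf₀ := hf.differentiableAt (Metric.ball_mem_nhds _ hγ₁)
  have hg₀ := hg.differentiableAt (Metric.ball_mem_nhds _ hγ₂)
  obtain ⟨L, hL⟩ := hF.exists_fderiv_onRows hγ₁ hf₀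
  obtain ⟨M, hM⟩ := hG.exists_fderiv_onRows hγ₂ hg₀
  have hgf := leftInvOn_onRows hGF
  have hLM : L * M = 1 := eq_one_of_linearSubst_eq_id (H := H) fun X ↦ by
    have := fderiv_fderiv_of_leftInverse (by rwa [onRows_zero hF0]) hf₀
      (eventually_of_mem (Metric.ball_mem_nhds _ hγ₁) hgf) (row X)
    rwa [onRows_zero hF0, hL, hM, onRows_row, onRows_row, row.injective.eq_iff,
      linearSubst_linearSubst] at this
  have hM_inj : Function.Injective (linearSubst (H := H) M) :=
    linearSubst_injective (mul_eq_one_comm.1 hLM)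
  have hf_linear := eqOn_fderiv_of_leftInvOn_ball hf hf_maps hg (mapsTo_onRows hGmaps) hgf
    (onRows_zero hF0) (hM ▸ row.injective.comp (hM_inj.comp row.symm.injective))
  refine ⟨L, .of_mul_eq_one M hLM, fun X hX ↦ row.injective ?_⟩
  rw [← onRows_row, hf_linear (row_mem_ball_zero_iff.2 hX), hL, onRows_row]

open NC in
/-- A free biholomorphic map `F : [B(H)ⁿ]_{γ₁} → [B(H)ⁿ]_{γ₂}` with `F(0) = 0` is linear:
`F = Φ_L` for an invertible operator `L` on `ℂⁿ`. -/
theorem free_biholomorphic_fixing_origin_is_linear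
    {H : Type*} [NormedAddCommGroup H] [InnerProductSpace ℂ H] [CompleteSpace H]
    [TopologicalSpace.SeparableSpace H] (hH : ¬ FiniteDimensional ℂ H)
    {n : ℕ} {γ₁ γ₂ : ℝ} (hγ₁ : 0 < γ₁) (hγ₂ : 0 < γ₂)
    (F G : (Fin n → H →L[ℂ] H) → Fin n → H →L[ℂ] H)
    (hF : IsFreeHoloMap γ₁ F) (hFmaps : Set.MapsTo F (ball n H γ₁) (ball n H γ₂))
    (hG : IsFreeHoloMap γ₂ G) (hGmaps : Set.MapsTo G (ball n H γ₂) (ball n H γ₁))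
    (hGF : ∀ X ∈ ball n H γ₁, G (F X) = X)
    (hFG : ∀ Y ∈ ball n H γ₂, F (G Y) = Y)
    (hF0 : F 0 = 0) :
    ∃ L : Matrix (Fin n) (Fin n) ℂ, IsUnit L ∧
      ∀ X ∈ ball n H γ₁, ∀ j, F X j = ∑ i, L i j • X i := by
  obtain ⟨L, hL, hFL⟩ :=
    free_biholomorphic_fixing_origin_is_linear_general hγ₁ hF hFmaps hG hGmaps hGF hF0
  exact ⟨L, hL, fun X hX ↦ congrFun (hFL hX)⟩
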